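/- Let S be a skew lattice and let A, B ⊆ S be subsets each of which is contained in a single D-class (any two elements of A are D-related, and any two elements of B are D-related). Let φ : S → S be a map with φ(A) ⊆ B. Then φ(x∧y) = φ(x)∧φ(y) for all x, y ∈ A if and only if φ(x∨y) = φ(x)∨φ(y) for all x, y ∈ A. -/

import Mathlib

/-!
On a D-class of a skew lattice the two operations determine each other by `x ∨ y = y ∧ x`.
A map that carries a subset of a D-class into a D-class and preserves one operation at `(y, x)`
therefore preserves the other at `(x, y)`.
-/

/-- A skew lattice: a noncommutative analogue of a lattice, with `⊓` for `∧` and `⊔` for `∨`. -/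
class SkewLattice (S : Type*) extends Max S, Min S where
  inf_idem (x : S) : x ⊓ x = x
  sup_idem (x : S) : x ⊔ x = x
  inf_assoc (x y z : S) : x ⊓ y ⊓ z = x ⊓ (y ⊓ z)
  sup_assoc (x y z : S) : x ⊔ y ⊔ z = x ⊔ (y ⊔ z)
  inf_sup_absorb_left (x y : S) : x ⊓ (x ⊔ y) = x
  inf_sup_absorb_right (x y : S) : (y ⊔ x) ⊓ x = x
  sup_inf_absorb_left (x y : S) : x ⊔ (x ⊓ y) = x
  sup_inf_absorb_right (x y : S) : (y ⊓ x) ⊔ x = x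

namespace SkewLattice

variable {S : Type*} [SkewLattice S] {x y : S}

/-- Green's relation D on a skew lattice, expressed through `⊓`. -/
def GreenD (x y : S) : Prop :=
  x ⊓ y ⊓ x = x ∧ y ⊓ x ⊓ y = y

theorem sup_eq_right_of_inf_eq_left (h : x ⊓ y = x) : x ⊔ y = y := by
  simpa only [h] using sup_inf_absorb_right y x

theorem sup_inf_eq_inf_of_inf_inf_eq (h : x ⊓ y ⊓ x = x) : x ⊔ (y ⊓ x) = y ⊓ x :=
  sup_eq_right_of_inf_eq_left ((inf_assoc x y x).symm.trans h)

theorem sup_sup_eq_of_inf_inf_eq (h : x ⊓ y ⊓ x = x) : y ⊔ x ⊔ y = y := by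
  have sup_inf_eq : y ⊔ x ⊔ (y ⊓ x) = y := by
    rw [sup_assoc, sup_inf_eq_inf_of_inf_inf_eq h, sup_inf_absorb_left]
  calc
    y ⊔ x ⊔ y = y ⊔ x ⊔ (y ⊔ x ⊔ (y ⊓ x)) := by rw [sup_inf_eq]
    _ = y ⊔ x ⊔ (y ⊓ x) := by rw [← sup_assoc (y ⊔ x), sup_idem]
    _ = y := sup_inf_eq

theorem GreenD.sup_eq_inf_swap (h : GreenD x y) : x ⊔ y = y ⊓ x := by
  have sup_inf : x ⊔ (y ⊓ x) = y ⊓ x := sup_inf_eq_inf_of_inf_inf_eq h.1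
  calc
    x ⊔ y = x ⊔ (y ⊔ (y ⊓ x)) := by rw [sup_inf_absorb_left]
    _ = x ⊔ (y ⊔ (x ⊔ (y ⊓ x))) := by rw [sup_inf]
    _ = x ⊔ y ⊔ x ⊔ (y ⊓ x) := by simp only [sup_assoc]
    _ = x ⊔ (y ⊓ x) := by rw [sup_sup_eq_of_inf_inf_eq h.2]
    _ = y ⊓ x := sup_inf

end SkewLattice

open SkewLattice in
theorem wedge_hom_iff_vee_hom_general {S T : Type*} [SkewLattice S] [SkewLattice T]
    {A : Set S} {φ : S → T} (hA : ∀ x ∈ A, ∀ y ∈ A, GreenD x y)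
    (hφ : ∀ x ∈ A, ∀ y ∈ A, GreenD (φ x) (φ y)) :
    (∀ x ∈ A, ∀ y ∈ A, φ (x ⊓ y) = φ x ⊓ φ y) ↔
      (∀ x ∈ A, ∀ y ∈ A, φ (x ⊔ y) = φ x ⊔ φ y) := by
  constructor
  · intro map_inf x hx y hy
    rw [(hA x hx y hy).sup_eq_inf_swap, (hφ x hx y hy).sup_eq_inf_swap, map_inf y hy x hx]
  · intro map_sup x hx y hy
    rw [← (hA y hy x hx).sup_eq_inf_swap, ← (hφ y hy x hx).sup_eq_inf_swap, map_sup y hy x hx]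

/-- A map between subsets of single D-classes is a ∧-homomorphism iff it is a
∨-homomorphism. -/
theorem wedge_hom_iff_vee_hom {S : Type*} (wedge vee : S → S → S)
    (wedge_idem : ∀ x : S, wedge x x = x)
    (vee_idem : ∀ x : S, vee x x = x)
    (wedge_assoc : ∀ x y z : S, wedge (wedge x y) z = wedge x (wedge y z))
    (vee_assoc : ∀ x y z : S, vee (vee x y) z = vee x (vee y z))
    (abs₁ : ∀ x y : S, wedge x (vee x y) = x)
    (abs₂ : ∀ x y : S, wedge (vee y x) x = x)
    (abs₃ : ∀ x y : S, vee x (wedge x y) = x)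
    (abs₄ : ∀ x y : S, vee (wedge y x) x = x)
    (A B : Set S)
    (hA : ∀ x ∈ A, ∀ y ∈ A, wedge (wedge x y) x = x ∧ wedge (wedge y x) y = y)
    (hB : ∀ x ∈ B, ∀ y ∈ B, wedge (wedge x y) x = x ∧ wedge (wedge y x) y = y)
    (φ : S → S) (hφ : ∀ x ∈ A, φ x ∈ B) :
    (∀ x ∈ A, ∀ y ∈ A, φ (wedge x y) = wedge (φ x) (φ y)) ↔
      (∀ x ∈ A, ∀ y ∈ A, φ (vee x y) = vee (φ x) (φ y)) := by
  let _ : SkewLattice S :=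
    { max := vee
      min := wedge
      inf_idem := wedge_idem
      sup_idem := vee_idem
      inf_assoc := wedge_assoc
      sup_assoc := vee_assoc
      inf_sup_absorb_left := abs₁
      inf_sup_absorb_right := abs₂
      sup_inf_absorb_left := abs₃
      sup_inf_absorb_right := abs₄ }
  exact wedge_hom_iff_vee_hom_general hA fun x hx y hy => hB _ (hφ x hx) _ (hφ y hy)
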